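/- conv(X^{l,u}) equals the set of all (z,δ) ∈ R^n × R^m satisfying: (i) the nested linearization system; (ii) the mixing inequality Mix≤(S',p) for every p ∈ I and every S' ⊆ J with |S'∖S_p| ≤ u − 1; and (iii) the mixing inequality Mix≥(S',p) for every p ∈ I and every S' ⊆ J with |S'∪S_{p−1}| ≤ n − l < |S'∪S_p|. -/

import Mathlib

open Finset

noncomputable section

def Xset (n m l u : ℕ) (S : Fin m → Finset (Fin n)) : Set ((Fin n → ℝ) × (Fin m → ℝ)) :=
  {zd | (∀ j, zd.1 j = 0 ∨ zd.1 j = 1) ∧ (∀ i, zd.2 i = 0 ∨ zd.2 i = 1) ∧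
        (∀ i, zd.2 i = ∏ j ∈ S i, (1 - zd.1 j)) ∧
        (l : ℝ) ≤ ∑ j, zd.1 j ∧ ∑ j, zd.1 j ≤ (u : ℝ)}

def Dset (n m l u : ℕ) (S : Fin m → Finset (Fin n)) : Set (Fin m → ℝ) :=
  Prod.snd '' Xset n m l u S

def Xfiber (n m l u : ℕ) (S : Fin m → Finset (Fin n)) (δ : Fin m → ℝ) :
    Set (Fin n → ℝ) :=
  {z | (z, δ) ∈ Xset n m l u S}

/-- The family is closed under nonempty intersection. -/
def ClosedInter (n m : ℕ) (S : Fin m → Finset (Fin n)) : Prop :=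
  ∀ i j : Fin m, (S i ∩ S j).Nonempty → ∃ k, S i ∩ S j = S k

/-- The family is proper. -/
def ProperFam (n m l u : ℕ) (S : Fin m → Finset (Fin n)) : Prop :=
  ClosedInter n m S ∧
  ∃ D : Finset (Fin m → ℝ), (D : Set (Fin m → ℝ)) = Dset n m l u S ∧ D.card = m + 1 ∧
    AffineIndependent ℝ (Subtype.val : {x : Fin m → ℝ // x ∈ D} → (Fin m → ℝ))

/-- `f x ≤ c` is valid and defines a facet of `conv P`. -/
def IsFacet {E : Type*} [AddCommGroup E] [Module ℝ E] (P : Set E) (f : E → ℝ) (c : ℝ) :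
    Prop :=
  (∀ x ∈ P, f x ≤ c) ∧
  Module.finrank ℝ (affineSpan ℝ {x ∈ convexHull ℝ P | f x = c}).direction + 1 =
    Module.finrank ℝ (affineSpan ℝ P).direction

def SS (n m : ℕ) (S : Fin m → Finset (Fin n)) : ℕ → Finset (Fin n) :=
  fun k => if h : 1 ≤ k ∧ k ≤ m then S ⟨k - 1, by omega⟩ else if k = 0 then ∅ else Finset.univ

def dd (m : ℕ) (δ : Fin m → ℝ) : ℕ → ℝ :=
  fun k => if h : 1 ≤ k ∧ k ≤ m then δ ⟨k - 1, by omega⟩ else if k = 0 then 1 else 0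

def mixLeLHS (n m u : ℕ) (S : Fin m → Finset (Fin n)) (p : ℕ) (S' : Finset (Fin n))
    (zd : (Fin n → ℝ) × (Fin m → ℝ)) : ℝ :=
  ∑ j ∈ S', zd.1 j + ((u : ℝ) - ((S' \ SS n m S p).card : ℝ)) * dd m zd.2 p
    + ∑ i ∈ Finset.Icc (p + 1) m,
        (((S' \ SS n m S (i - 1)).card : ℝ) - ((S' \ SS n m S i).card : ℝ)) * dd m zd.2 i

def MixLe (n m u : ℕ) (S : Fin m → Finset (Fin n)) (p : ℕ) (S' : Finset (Fin n))
    (zd : (Fin n → ℝ) × (Fin m → ℝ)) : Prop :=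
  mixLeLHS n m u S p S' zd ≤ (u : ℝ)

def mixGeLHS (n m l : ℕ) (S : Fin m → Finset (Fin n)) (p : ℕ) (S' : Finset (Fin n))
    (zd : (Fin n → ℝ) × (Fin m → ℝ)) : ℝ :=
  (((S' ∪ SS n m S p).card : ℝ) - (n : ℝ) + (l : ℝ)) * dd m zd.2 p
    + ∑ i ∈ Finset.Icc (p + 1) m,
        (((S' ∪ SS n m S i).card : ℝ) - ((S' ∪ SS n m S (i - 1)).card : ℝ)) * dd m zd.2 i
    - ∑ j ∈ S', zd.1 j

def MixGe (n m l : ℕ) (S : Fin m → Finset (Fin n)) (p : ℕ) (S' : Finset (Fin n))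
    (zd : (Fin n → ℝ) × (Fin m → ℝ)) : Prop :=
  mixGeLHS n m l S p S' zd ≤ 0

def NestedLin (n m l u : ℕ) (S : Fin m → Finset (Fin n))
    (zd : (Fin n → ℝ) × (Fin m → ℝ)) : Prop :=
  ((l : ℝ) ≤ ∑ j, zd.1 j) ∧ (∑ j, zd.1 j ≤ (u : ℝ)) ∧
  (∀ i : Fin m, ∀ j ∈ S i, zd.1 j + zd.2 i ≤ 1) ∧
  (1 ≤ dd m zd.2 1 + ∑ j ∈ SS n m S 1, zd.1 j) ∧
  (0 ≤ dd m zd.2 m) ∧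
  (∀ j, 0 ≤ zd.1 j) ∧
  (∀ j, j ∉ SS n m S m → zd.1 j ≤ 1) ∧
  (∀ i : ℕ, 1 ≤ i → i + 1 ≤ m → dd m zd.2 (i + 1) ≤ dd m zd.2 i) ∧
  (∀ i : ℕ, 1 ≤ i → i + 1 ≤ m →
    dd m zd.2 i - dd m zd.2 (i + 1) ≤ ∑ j ∈ SS n m S (i + 1) \ SS n m S i, zd.1 j)

def FollowsPattern (n : ℕ) (α α' : Fin n → ℝ) : Prop :=
  (∀ j, (0 ≤ α j → 0 ≤ α' j) ∧ (α j ≤ 0 → α' j ≤ 0)) ∧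
  (∀ j₁ j₂ : Fin n, α j₂ ≤ α j₁ → α' j₂ ≤ α' j₁)

def IsFacetSet {E : Type*} [AddCommGroup E] [Module ℝ E] (P : Set E) (F : Set E) : Prop :=
  ∃ (f : E →ₗ[ℝ] ℝ) (c : ℝ), (∀ x ∈ P, f x ≤ c) ∧
    F = {x ∈ convexHull ℝ P | f x = c} ∧
    Module.finrank ℝ (affineSpan ℝ F).direction + 1 =
      Module.finrank ℝ (affineSpan ℝ P).direction

/-!
Put `δ_0 = 1`, `δ_{m+1} = 0` and `λ_k = δ_k - δ_{k+1}`. A point of `Xset` is the 0/1 vector of a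
set `T` with `l ≤ |T| ≤ u`, and its `δ`-part only records the largest `k` with `T ∩ S_k = ∅`. Let
`F_k` be the family of the sets `T` with a given `k`. Since the vectors `δ` so obtained are affinely
independent, `(z, δ)` lies in the convex hull if and only if every `λ_k` is nonnegative and `z` lies
in the Minkowski sum `∑ k, λ_k • conv F_k`.

Each `F_k` is a generalized matroid, so for every objective it has a member that maximizes the
objective and, simultaneously, the intersection with each superlevel set of positive height, while
minimizing the intersection with each sublevel set of negative height. By the layer cake formula,
one such member per `k` shows that the Minkowski sum is described by
`∑ k, λ_k * min_{T ∈ F_k} |T ∩ A| ≤ ∑ j ∈ A, z_j ≤ ∑ k, λ_k * max_{T ∈ F_k} |T ∩ A|` for all `A`.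

The maximum is `|A \ S_k|` as long as this is less than `u`; otherwise it is `u`, diminished by one
if `k < m` and `A` misses `S_{k+1} \ S_k`. Adding the missed layers to `A`, whose weights are
bounded by the linearization inequality `λ_k ≤ ∑ j ∈ S_{k+1} \ S_k, z_j`, turns these rank
inequalities into `Mix≤`. The minima lead to `Mix≥` in the same way, after the layers
contained in `A` are removed.
-/

section GeneralizedMatroid

variable {ι : Type*} [DecidableEq ι]

/-- A generalized matroid in the sense of Tardos, given by the simultaneous exchange property of
M♮-convex set families. Unlike the bases of a matroid, its members may differ in size. -/
def IsGeneralizedMatroid (F : Set (Finset ι)) : Prop :=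
  ∀ ⦃X⦄, X ∈ F → ∀ ⦃Y⦄, Y ∈ F → ∀ ⦃e⦄, e ∈ X → e ∉ Y →
    (X.erase e ∈ F ∧ insert e Y ∈ F) ∨
      ∃ f ∈ Y, f ∉ X ∧ insert f (X.erase e) ∈ F ∧ insert e (Y.erase f) ∈ F

lemma sum_insert_erase {X : Finset ι} {e f : ι} (he : e ∈ X) (hf : f ∉ X) (α : ι → ℝ) :
    ∑ j ∈ insert f (X.erase e), α j = ∑ j ∈ X, α j - α e + α f := by
  rw [sum_insert (fun h => hf (mem_of_mem_erase h)), ← add_sum_erase X α he]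
  ring

lemma card_filter_insert_erase {X : Finset ι} {e f : ι} (he : e ∈ X) (hf : f ∉ X)
    {p : ι → Prop} [DecidablePred p] (hpe : p e) (hpf : p f) :
    #{j ∈ insert f (X.erase e) | p j} = #{j ∈ X | p j} := by
  rw [filter_insert, if_pos hpf, filter_erase, card_insert_of_notMem (by simp [hf]),
    card_erase_add_one (by simp [he, hpe])]

namespace IsGeneralizedMatroid

variable {F : Set (Finset ι)} {α : ι → ℝ} {T X : Finset ι} {e : ι}

lemma exists_exchange_of_pos (hF : IsGeneralizedMatroid F) (hT : T ∈ F)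
    (hmax : IsMaxOn (fun Y => ∑ j ∈ Y, α j) F T) (hX : X ∈ F) (heX : e ∈ X) (heT : e ∉ T)
    (hpos : 0 < α e) : ∃ f ∈ T, f ∉ X ∧ insert f (X.erase e) ∈ F ∧ α e ≤ α f := by
  rcases hF hX hT heX heT with ⟨-, hadd⟩ | ⟨f, hfT, hfX, hX', hT'⟩
  · have := isMaxOn_iff.mp hmax _ hadd
    rw [sum_insert heT] at this
    linarith
  · have := isMaxOn_iff.mp hmax _ hT'
    rw [sum_insert_erase hfT heT] at this
    exact ⟨f, hfT, hfX, hX', by linarith⟩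

lemma exists_exchange_of_neg (hF : IsGeneralizedMatroid F) (hT : T ∈ F)
    (hmax : IsMaxOn (fun Y => ∑ j ∈ Y, α j) F T) (hX : X ∈ F) (heT : e ∈ T) (heX : e ∉ X)
    (hneg : α e < 0) : ∃ f ∈ X, f ∉ T ∧ insert e (X.erase f) ∈ F ∧ α f ≤ α e := by
  rcases hF hT hX heT heX with ⟨hdel, -⟩ | ⟨f, hfX, hfT, hT', hX'⟩
  · have := isMaxOn_iff.mp hmax _ hdel
    rw [← add_sum_erase T α heT] at this
    linarith
  · have := isMaxOn_iff.mp hmax _ hT'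
    rw [sum_insert_erase heT hfT] at this
    exact ⟨f, hfX, hfT, hX', by linarith⟩

/- Among the counterexamples `X` the one closest to `T` can still be moved one step towards `T`
inside the superlevel set. -/
lemma card_superlevel_le (hF : IsGeneralizedMatroid F) (hT : T ∈ F)
    (hmax : IsMaxOn (fun Y => ∑ j ∈ Y, α j) F T) {t : ℝ} (ht : 0 < t) (hX : X ∈ F) :
    #{j ∈ X | t ≤ α j} ≤ #{j ∈ T | t ≤ α j} := by
  induction hd : #(X \ T) using Nat.strong_induction_on generalizing X with
  | _ d ih =>
    by_contra! hlt
    obtain ⟨e, he, heT⟩ := exists_mem_notMem_of_card_lt_card hlt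
    obtain ⟨heX, hte⟩ := mem_filter.mp he
    replace heT : e ∉ T := fun h => heT (mem_filter.mpr ⟨h, hte⟩)
    obtain ⟨f, hfT, hfX, hX', hef⟩ :=
      hF.exists_exchange_of_pos hT hmax hX heX heT (ht.trans_le hte)
    have hcloser : #(insert f (X.erase e) \ T) < d := by
      rw [insert_sdiff_of_mem _ hfT, erase_sdiff_comm, ← hd]
      exact card_erase_lt_of_mem (mem_sdiff.mpr ⟨heX, heT⟩)
    have := ih _ hcloser hX' rfl
    rw [card_filter_insert_erase heX hfX hte (hte.trans hef)] at this
    omega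

lemma card_sublevel_le (hF : IsGeneralizedMatroid F) (hT : T ∈ F)
    (hmax : IsMaxOn (fun Y => ∑ j ∈ Y, α j) F T) {t : ℝ} (ht : t < 0) (hX : X ∈ F) :
    #{j ∈ T | α j ≤ t} ≤ #{j ∈ X | α j ≤ t} := by
  induction hd : #(T \ X) using Nat.strong_induction_on generalizing X with
  | _ d ih =>
    by_contra! hlt
    obtain ⟨e, he, heX⟩ := exists_mem_notMem_of_card_lt_card hlt
    obtain ⟨heT, hte⟩ := mem_filter.mp he
    replace heX : e ∉ X := fun h => heX (mem_filter.mpr ⟨h, hte⟩)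
    obtain ⟨f, hfX, hfT, hX', hfe⟩ :=
      hF.exists_exchange_of_neg hT hmax hX heT heX (hte.trans_lt ht)
    have hcloser : #(T \ insert e (X.erase f)) < d := by
      rw [show T \ insert e (X.erase f) = (T \ X).erase e by grind, ← hd]
      exact card_erase_lt_of_mem (mem_sdiff.mpr ⟨heT, heX⟩)
    have := ih _ hcloser hX' rfl
    rw [card_filter_insert_erase hfX heX (hfe.trans hte) hte] at this
    omega

end IsGeneralizedMatroid

end GeneralizedMatroid

section LayerCake

variable {ι : Type*}

lemma sum_sub_mul_nonneg_of_superlevel (s : Finset ι) (α w : ι → ℝ) (c : ℝ)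
    (hc : ∀ j ∈ s, c ≤ α j) (hw : ∀ t, c < t → 0 ≤ ∑ j ∈ s with t ≤ α j, w j) :
    0 ≤ ∑ j ∈ s, (α j - c) * w j := by
  classical
  induction s using Finset.induction_on_min_value α generalizing c with
  | empty => simp
  | insert a s ha hmin ih =>
    have hrest : 0 ≤ ∑ j ∈ s, (α j - α a) * w j := by
      refine ih _ hmin fun t ht => ?_
      simpa only [filter_insert, if_neg (not_le.mpr ht)] using
        hw t ((hc a (mem_insert_self a s)).trans_lt ht)
    have hlevel : 0 ≤ (α a - c) * ∑ j ∈ insert a s, w j := by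
      rcases (hc a (mem_insert_self a s)).eq_or_lt with h | h
      · simp [h]
      · refine mul_nonneg (sub_nonneg.mpr h.le) ?_
        have := hw _ h
        rwa [filter_true_of_mem fun j hj => ?_] at this
        rcases mem_insert.mp hj with rfl | hj
        exacts [le_rfl, hmin j hj]
    have hsplit : ∑ j ∈ insert a s, (α j - c) * w j =
        ∑ j ∈ s, (α j - α a) * w j + (α a - c) * ∑ j ∈ insert a s, w j := by
      rw [sum_insert ha, sum_insert ha, mul_add, mul_sum, add_left_comm, ← sum_add_distrib]
      congr 1
      exact sum_congr rfl fun j _ => by ring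
    linarith

lemma sum_mul_nonneg_of_levels (s : Finset ι) (α w : ι → ℝ)
    (hpos : ∀ t, 0 < t → 0 ≤ ∑ j ∈ s with t ≤ α j, w j)
    (hneg : ∀ t, t < 0 → ∑ j ∈ s with α j ≤ t, w j ≤ 0) :
    0 ≤ ∑ j ∈ s, α j * w j := by
  have hP := sum_sub_mul_nonneg_of_superlevel s (fun j => (α j)⁺) w 0
    (fun j _ => posPart_nonneg _) fun t ht => by
      simpa only [posPart_def, le_sup_iff, not_le.mpr ht, or_false] using hpos t ht
  have hN := sum_sub_mul_nonneg_of_superlevel s (fun j => (α j)⁻) (-w) 0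
    (fun j _ => negPart_nonneg _) fun t ht => by
      simpa only [negPart_def, le_sup_iff, not_le.mpr ht, or_false, le_neg, Pi.neg_apply,
        sum_neg_distrib, neg_nonneg, neg_zero] using hneg (-t) (neg_neg_of_pos ht)
  refine (add_nonneg hP hN).trans_eq ?_
  rw [← sum_add_distrib]
  refine sum_congr rfl fun j _ => ?_
  rw [Pi.neg_apply, sub_zero, sub_zero, mul_neg, ← sub_eq_add_neg, ← sub_mul,
    posPart_sub_negPart]

end LayerCake

section MinkowskiSum

open scoped Pointwise

variable {ι κ : Type*} [DecidableEq ι]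

/-- The 0/1 vector of a finite set. -/
def incidenceVector (T : Finset ι) : ι → ℝ := fun j => if j ∈ T then 1 else 0

lemma sum_incidenceVector (A T : Finset ι) : ∑ j ∈ A, incidenceVector T j = #(T ∩ A) := by
  simp [incidenceVector, inter_comm]

lemma map_eq_sum_incidenceVector_mul [Fintype ι] (f : (ι → ℝ) →ₗ[ℝ] ℝ) (z : ι → ℝ) :
    f z = ∑ j, f (incidenceVector {j}) * z j := by
  rw [f.pi_apply_eq_sum_univ]
  refine sum_congr rfl fun j _ => ?_
  rw [smul_eq_mul, mul_comm]
  congr 2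
  ext i
  simp [incidenceVector, eq_comm]

variable {s : Finset κ} {F : κ → Set (Finset ι)} {c : κ → ℝ} {z : ι → ℝ}

lemma sum_mul_le_of_isMaxOn [Fintype ι] (hF : ∀ k ∈ s, IsGeneralizedMatroid (F k))
    (hc : ∀ k ∈ s, 0 ≤ c k)
    (hupper : ∀ A : Finset ι, ∃ X : κ → Finset ι, (∀ k ∈ s, X k ∈ F k) ∧
      ∑ j ∈ A, z j ≤ ∑ k ∈ s, c k * #(X k ∩ A))
    (hlower : ∀ A : Finset ι, ∃ X : κ → Finset ι, (∀ k ∈ s, X k ∈ F k) ∧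
      ∑ k ∈ s, c k * #(X k ∩ A) ≤ ∑ j ∈ A, z j)
    {α : ι → ℝ} {T : κ → Finset ι} (hT : ∀ k ∈ s, T k ∈ F k)
    (hmax : ∀ k ∈ s, IsMaxOn (fun Y => ∑ j ∈ Y, α j) (F k) (T k)) :
    ∑ j, α j * z j ≤ ∑ j, α j * (∑ k ∈ s, c k • incidenceVector (T k)) j := by
  set v := ∑ k ∈ s, c k • incidenceVector (T k) with hv
  have hsum (A : Finset ι) : ∑ j ∈ A, (v - z) j = ∑ k ∈ s, c k * #(T k ∩ A) - ∑ j ∈ A, z j := by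
    simp only [hv, Pi.sub_apply, sum_sub_distrib, Finset.sum_apply, Pi.smul_apply, smul_eq_mul]
    rw [sum_comm]
    simp only [← mul_sum, sum_incidenceVector]
  rw [← sub_nonneg, ← sum_sub_distrib]
  simp only [← mul_sub]
  refine sum_mul_nonneg_of_levels univ α (v - z) (fun t ht => ?_) fun t ht => ?_
  · obtain ⟨X, hX, hzX⟩ := hupper {j | t ≤ α j}
    rw [hsum, sub_nonneg]
    refine hzX.trans (sum_le_sum fun k hk => mul_le_mul_of_nonneg_left ?_ (hc k hk))
    simpa only [← filter_mem_eq_inter, mem_filter_univ, Nat.cast_le] using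
      (hF k hk).card_superlevel_le (hT k hk) (hmax k hk) ht (hX k hk)
  · obtain ⟨X, hX, hzX⟩ := hlower {j | α j ≤ t}
    rw [hsum, sub_nonpos]
    refine le_trans (sum_le_sum fun k hk => mul_le_mul_of_nonneg_left ?_ (hc k hk)) hzX
    simpa only [← filter_mem_eq_inter, mem_filter_univ, Nat.cast_le] using
      (hF k hk).card_sublevel_le (hT k hk) (hmax k hk) ht (hX k hk)

theorem mem_sum_smul_convexHull_incidenceVector [Finite ι]
    (hF : ∀ k ∈ s, IsGeneralizedMatroid (F k)) (hc : ∀ k ∈ s, 0 ≤ c k)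
    (hupper : ∀ A : Finset ι, ∃ X : κ → Finset ι, (∀ k ∈ s, X k ∈ F k) ∧
      ∑ j ∈ A, z j ≤ ∑ k ∈ s, c k * #(X k ∩ A))
    (hlower : ∀ A : Finset ι, ∃ X : κ → Finset ι, (∀ k ∈ s, X k ∈ F k) ∧
      ∑ k ∈ s, c k * #(X k ∩ A) ≤ ∑ j ∈ A, z j) :
    z ∈ ∑ k ∈ s, c k • convexHull ℝ (incidenceVector '' F k) := by
  cases nonempty_fintype ι
  set P := ∑ k ∈ s, c k • convexHull ℝ (incidenceVector '' F k)
  have hconvex : Convex ℝ P :=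
    sum_induction _ (Convex ℝ) (fun _ _ => Convex.add) (convex_singleton 0)
      fun k _ => (convex_convexHull ℝ _).smul (c k)
  have hcompact : IsCompact P :=
    sum_induction _ IsCompact (fun _ _ => IsCompact.add) isCompact_singleton
      fun k _ => (((F k).toFinite.image _).isCompact_convexHull ℝ).smul (c k)
  by_contra hz
  obtain ⟨f, b, hfb, hbz⟩ := geometric_hahn_banach_closed_point hconvex hcompact.isClosed hz
  obtain ⟨X, hX, -⟩ := hupper ∅
  choose! T hT hmax using fun k hk => (F k).exists_max_image
    (fun Y => ∑ j ∈ Y, f (incidenceVector {j})) (F k).toFinite ⟨X k, hX k hk⟩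
  have hvertex : ∑ k ∈ s, c k • incidenceVector (T k) ∈ P :=
    Set.finsetSum_mem_finsetSum s _ _ fun k hk =>
      Set.smul_mem_smul_set (subset_convexHull ℝ _ ⟨T k, hT k hk, rfl⟩)
  have hle := sum_mul_le_of_isMaxOn hF hc hupper hlower hT fun k hk => isMaxOn_iff.mpr (hmax k hk)
  simp only [← ContinuousLinearMap.coe_coe, ← map_eq_sum_incidenceVector_mul] at hle
  exact ((hbz.trans_le hle).trans (hfb _ hvertex)).false

end MinkowskiSum

section CardBoundedFamily

variable {ι : Type*}

lemma exists_mem_notMem_of_card_le_card {X Y : Finset ι} (h : #X ≤ #Y) {e : ι} (heX : e ∈ X)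
    (heY : e ∉ Y) : ∃ f ∈ Y, f ∉ X := by
  by_contra! hsub
  exact heY (eq_of_subset_of_card_le hsub h ▸ heX)

variable [DecidableEq ι] {R L : Finset ι} {a l u : ℕ}

/-- The sets avoiding `R`, containing at least `a` elements of `L` and having between `l` and `u`
elements. The supports of the points of `Xset` with a given `δ` form such a family. -/
def cardBoundedFamily (R L : Finset ι) (a l u : ℕ) : Set (Finset ι) :=
  {T | Disjoint T R ∧ a ≤ #(T ∩ L) ∧ l ≤ #T ∧ #T ≤ u}

section Exchange

variable {T : Finset ι} {e f : ι}

lemma erase_mem_cardBoundedFamily (hT : T ∈ cardBoundedFamily R L a l u) (he : e ∈ T)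
    (hl : l < #T) (hL : e ∈ L → a < #(T ∩ L)) : T.erase e ∈ cardBoundedFamily R L a l u := by
  obtain ⟨hR, ha, -, hu⟩ := hT
  have hcard := card_erase_of_mem he
  refine ⟨hR.mono_left (erase_subset e T), ?_, by omega, by omega⟩
  rw [erase_inter]
  by_cases heL : e ∈ L
  · exact (Nat.le_sub_one_of_lt (hL heL)).trans pred_card_le_card_erase
  · rwa [erase_eq_of_notMem fun h => heL (mem_inter.mp h).2]

lemma insert_mem_cardBoundedFamily (hT : T ∈ cardBoundedFamily R L a l u) (he : e ∉ T)
    (heR : e ∉ R) (hu : #T < u) : insert e T ∈ cardBoundedFamily R L a l u := by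
  obtain ⟨hR, ha, hl, -⟩ := hT
  have hcard := card_insert_of_notMem he
  exact ⟨disjoint_insert_left.mpr ⟨heR, hR⟩,
    ha.trans (card_le_card (inter_subset_inter_right (subset_insert e T))), by omega, by omega⟩

lemma insert_erase_mem_cardBoundedFamily (hT : T ∈ cardBoundedFamily R L a l u) (he : e ∈ T)
    (hf : f ∉ T) (hfR : f ∉ R) (hL : e ∈ L → f ∈ L ∨ a < #(T ∩ L)) :
    insert f (T.erase e) ∈ cardBoundedFamily R L a l u := by
  obtain ⟨hR, ha, hlu⟩ := hT
  have hcard : #(insert f (T.erase e)) = #T := by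
    rw [card_insert_of_notMem (by simp [hf]), card_erase_add_one he]
  refine ⟨disjoint_insert_left.mpr ⟨hfR, hR.mono_left (erase_subset e T)⟩, ?_, hcard ▸ hlu⟩
  by_cases heL : e ∈ L
  · rcases hL heL with hfL | hlt
    · rw [← filter_mem_eq_inter, card_filter_insert_erase he hf heL hfL, filter_mem_eq_inter]
      exact ha
    · exact (Nat.le_sub_one_of_lt hlt).trans
        (pred_card_le_card_erase.trans (card_le_card (s := (T ∩ L).erase e) (by grind)))
  · exact ha.trans (card_le_card (by grind))

end Exchange

lemma isGeneralizedMatroid_cardBoundedFamily (R L : Finset ι) (a l u : ℕ) :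
    IsGeneralizedMatroid (cardBoundedFamily R L a l u) := by
  intro X hX Y hY e heX heY
  have ⟨hXR, hXa, hXl, hXu⟩ := hX
  have ⟨hYR, hYa, hYl, hYu⟩ := hY
  have exchange {f : ι} (hfY : f ∈ Y) (hfX : f ∉ X) (hXL : e ∈ L → f ∈ L ∨ a < #(X ∩ L))
      (hYL : f ∈ L → e ∈ L ∨ a < #(Y ∩ L)) :
      ∃ f ∈ Y, f ∉ X ∧ insert f (X.erase e) ∈ cardBoundedFamily R L a l u ∧
        insert e (Y.erase f) ∈ cardBoundedFamily R L a l u :=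
    ⟨f, hfY, hfX,
      insert_erase_mem_cardBoundedFamily hX heX hfX (disjoint_left.mp hYR hfY) hXL,
      insert_erase_mem_cardBoundedFamily hY hfY heY (disjoint_left.mp hXR heX) hYL⟩
  by_cases htight : e ∈ L ∧ #(X ∩ L) ≤ a
  · obtain ⟨f, hfY, hfX⟩ := exists_mem_notMem_of_card_le_card (htight.2.trans hYa)
      (mem_inter_of_mem heX htight.1) fun h => heY (mem_of_mem_inter_left h)
    obtain ⟨hfY, hfL⟩ := mem_inter.mp hfY
    exact .inr (exchange hfY (fun h => hfX (mem_inter_of_mem h hfL)) (fun _ => .inl hfL)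
      fun _ => .inl htight.1)
  replace htight : e ∈ L → a < #(X ∩ L) := by simpa using htight
  by_cases hroom : l < #X ∧ #Y < u
  · exact .inl ⟨erase_mem_cardBoundedFamily hX heX hroom.1 htight,
      insert_mem_cardBoundedFamily hY heY (disjoint_left.mp hXR heX) hroom.2⟩
  have hle : #X ≤ #Y := by omega
  right
  by_cases hslack : e ∈ L ∨ a < #(Y ∩ L)
  · obtain ⟨f, hfY, hfX⟩ := exists_mem_notMem_of_card_le_card hle heX heY
    exact exchange hfY hfX (fun h => .inr (htight h)) fun _ => hslack
  · push Not at hslack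
    have hle' : #(X \ L) ≤ #(Y \ L) := by
      have := card_sdiff_add_card_inter X L
      have := card_sdiff_add_card_inter Y L
      omega
    obtain ⟨f, hfY, hfX⟩ := exists_mem_notMem_of_card_le_card hle'
      (mem_sdiff.mpr ⟨heX, hslack.1⟩) fun h => heY (mem_sdiff.mp h).1
    obtain ⟨hfY, hfL⟩ := mem_sdiff.mp hfY
    exact exchange hfY (fun h => hfX (mem_sdiff.mpr ⟨h, hfL⟩)) (fun h => absurd h hslack.1)
      fun h => absurd h hfL

/-- The rank function of `cardBoundedFamily R L a l u`: the largest intersection of a member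
with `A`. The truncated difference `a - #(A ∩ L)` counts the elements of `L` that a member must
contain outside `A`. -/
def maxInter (R L : Finset ι) (a u : ℕ) (A : Finset ι) : ℕ :=
  min #(A \ R) (u - (a - #(A ∩ L)))

/-- The corank function of `cardBoundedFamily R L a l u`: the smallest intersection of a member
with `A`. -/
def minInter [Fintype ι] (R L : Finset ι) (a l : ℕ) (A : Finset ι) : ℕ :=
  max (l - #(A ∪ R)ᶜ) (a - #(L \ A))

variable [Fintype ι]

lemma exists_mem_maxInter_le (hLR : Disjoint L R) (haL : a ≤ #L) (hau : a ≤ u) (hlR : l ≤ #Rᶜ)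
    (hlu : l ≤ u) (A : Finset ι) :
    ∃ T ∈ cardBoundedFamily R L a l u, maxInter R L a u A ≤ #(T ∩ A) := by
  obtain ⟨K, hKAL, hK⟩ := exists_subset_card_eq (min_le_right a #(A ∩ L))
  have hAL : A ∩ L ⊆ A \ R := fun j hj =>
    mem_sdiff.mpr ⟨mem_of_mem_inter_left hj, disjoint_left.mp hLR (mem_of_mem_inter_right hj)⟩
  obtain ⟨L', hKL', hL'L, hL'⟩ := exists_subsuperset_card_eq (hKAL.trans inter_subset_right)
    (hK.trans_le (min_le_left _ _)) haL
  obtain ⟨B, hKB, hBA, hB⟩ := exists_subsuperset_card_eq (n := maxInter R L a u A)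
    (hKAL.trans hAL) (by have := card_le_card hAL; unfold maxInter; omega) (min_le_left _ _)
  have hunion : #(B ∪ L') ≤ u := by
    have := card_union_add_card_inter B L'
    have := card_le_card (subset_inter hKB hKL')
    unfold maxInter at hB
    omega
  have hR : B ∪ L' ⊆ Rᶜ := union_subset
    (hBA.trans fun j hj => mem_compl.mpr (mem_sdiff.mp hj).2)
    (hL'L.trans (subset_compl_iff_disjoint_right.mpr hLR))
  obtain ⟨T, hT, hTR, hTcard⟩ := exists_subsuperset_card_eq (n := max l #(B ∪ L')) hR
    (le_max_right _ _) (max_le hlR (card_le_card hR))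
  obtain ⟨hBT, hL'T⟩ := union_subset_iff.mp hT
  refine ⟨T, ⟨subset_compl_iff_disjoint_right.mp hTR, ?_, by omega, by omega⟩, ?_⟩
  · exact hL'.ge.trans (card_le_card (subset_inter hL'T hL'L))
  · exact hB.ge.trans (card_le_card (subset_inter hBT (hBA.trans sdiff_subset)))

/- A member of size at most `max l a` meeting `Aᶜ` in as many elements as possible. -/
lemma exists_mem_le_minInter (hLR : Disjoint L R) (haL : a ≤ #L) (hau : a ≤ u) (hlR : l ≤ #Rᶜ)
    (hlu : l ≤ u) (A : Finset ι) :
    ∃ T ∈ cardBoundedFamily R L a l u, #(T ∩ A) ≤ minInter R L a l A := by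
  obtain ⟨T, ⟨hTR, hTa, hTl, hTu⟩, hT⟩ :=
    exists_mem_maxInter_le hLR haL (le_max_right l a) hlR (le_max_left l a) Aᶜ
  refine ⟨T, ⟨hTR, hTa, hTl, hTu.trans (max_le hlu hau)⟩, ?_⟩
  have hsplit := card_sdiff_add_card_inter T A
  have hLA : L \ A ⊆ (A ∪ R)ᶜ := by
    rw [compl_union, sdiff_eq_inter_compl, inter_comm]
    exact inter_subset_inter_left (subset_compl_iff_disjoint_right.mpr hLR)
  have := card_le_card hLA
  rw [maxInter, inter_comm Aᶜ, ← sdiff_eq_inter_compl, ← sdiff_eq_inter_compl,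
    sdiff_eq_inter_compl Aᶜ, ← compl_union] at hT
  unfold minInter
  omega

end CardBoundedFamily

section Chain

variable {ι : Type*} [DecidableEq ι] {C : ℕ → Finset ι} {A : Finset ι} {k m l u : ℕ}
  {w : ℕ → ℝ} {z : ι → ℝ}

/-- The elements that the chain `C` gains at step `k`. -/
def layer (C : ℕ → Finset ι) (k : ℕ) : Finset ι := C (k + 1) \ C k

/-- The number of elements of `layer C k` required in the `k`-th slice: one when `δ_{k+1}` exists
and has to vanish, none for the last layer `J \ S_m`. -/
def demand (m k : ℕ) : ℕ := if k < m then 1 else 0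

lemma demand_le_one (m k : ℕ) : demand m k ≤ 1 := by unfold demand; split <;> omega

/-- The supports of size between `l` and `u` that avoid `C k` but, for `k < m`, not `C (k + 1)`. -/
def chainSlice (C : ℕ → Finset ι) (m l u k : ℕ) : Set (Finset ι) :=
  cardBoundedFamily (C k) (layer C k) (demand m k) l u

lemma disjoint_iff_le_of_mem_chainSlice (hC : Monotone C) {T : Finset ι}
    (hT : T ∈ chainSlice C m l u k) {i : ℕ} (hi : i ≤ m) : Disjoint T (C i) ↔ i ≤ k := by
  refine ⟨fun hdisj => ?_, fun hik => hT.1.mono_right (hC hik)⟩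
  by_contra! hki
  have hcard := hT.2.1
  rw [demand, if_pos (hki.trans_le hi), one_le_card] at hcard
  obtain ⟨j, hj⟩ := hcard
  obtain ⟨hjT, hjL⟩ := mem_inter.mp hj
  exact disjoint_left.mp hdisj hjT (hC hki (mem_sdiff.mp hjL).1)

lemma exists_mem_chainSlice (h0 : C 0 = ∅) {T : Finset ι} (hl : l ≤ #T) (hu : #T ≤ u) :
    ∃ k ≤ m, T ∈ chainSlice C m l u k := by
  set k := Nat.findGreatest (fun k => Disjoint T (C k)) m
  have hdisj : Disjoint T (C k) :=
    Nat.findGreatest_spec (P := fun k => Disjoint T (C k)) (Nat.zero_le m) (by simp [h0])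
  refine ⟨k, Nat.findGreatest_le m, hdisj, ?_, hl, hu⟩
  unfold demand
  split_ifs with hk
  · obtain ⟨j, hjT, hjC⟩ := not_disjoint_iff.mp (Nat.findGreatest_is_greatest k.lt_succ_self hk)
    exact one_le_card.mpr
      ⟨j, mem_inter_of_mem hjT (mem_sdiff.mpr ⟨hjC, disjoint_left.mp hdisj hjT⟩)⟩
  · exact Nat.zero_le _

lemma maxInter_layer_of_lt (hA : #(A \ C k) < u) :
    maxInter (C k) (layer C k) (demand m k) u A = #(A \ C k) := by
  have := demand_le_one m k
  unfold maxInter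
  omega

lemma maxInter_layer_of_le (hu : 0 < u) (hA : u ≤ #(A \ C k)) :
    (maxInter (C k) (layer C k) (demand m k) u A : ℝ) =
      u - if k < m ∧ Disjoint A (layer C k) then 1 else 0 := by
  have hmeet : Disjoint A (layer C k) ↔ #(A ∩ layer C k) = 0 := by
    rw [card_eq_zero, disjoint_iff_inter_eq_empty]
  unfold maxInter demand
  split_ifs with hk hdisj hdisj
  · rw [hmeet.mp hdisj.2, min_eq_right (by omega), Nat.cast_sub hu, Nat.cast_one]
  · rw [min_eq_right (by omega), sub_zero, Nat.cast_inj]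
    have := hmeet.not.mp fun h => hdisj ⟨hk, h⟩
    omega
  · exact absurd hdisj.1 hk
  · rw [min_eq_right (by omega), Nat.zero_sub, Nat.sub_zero, sub_zero]

lemma minInter_layer_of_lt [Fintype ι] (hA : #(A ∪ C k)ᶜ < l) :
    minInter (C k) (layer C k) (demand m k) l A = l - #(A ∪ C k)ᶜ := by
  have := demand_le_one m k
  unfold minInter
  omega

lemma minInter_layer_of_le [Fintype ι] (hA : l ≤ #(A ∪ C k)ᶜ) :
    (minInter (C k) (layer C k) (demand m k) l A : ℝ) =
      if k < m ∧ layer C k ⊆ A then 1 else 0 := by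
  have hsub : layer C k ⊆ A ↔ #(layer C k \ A) = 0 := by
    rw [card_eq_zero, sdiff_eq_empty_iff_subset]
  unfold minInter demand
  rw [Nat.sub_eq_zero_of_le hA, Nat.zero_max]
  split_ifs with hk hle hle
  · rw [hsub.mp hle.2, Nat.cast_one]
  · have := hsub.not.mp fun h => hle ⟨hk, h⟩
    rw [Nat.sub_eq_zero_of_le (by omega), Nat.cast_zero]
  · exact absurd hle.1 hk
  · rw [Nat.zero_sub, Nat.cast_zero]

lemma pairwise_disjoint_layer (hC : Monotone C) : Pairwise (Function.onFun Disjoint (layer C)) :=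
  (pairwise_disjoint_on (layer C)).mpr fun _ _ hik => disjoint_left.mpr fun _ hj hj' =>
    (mem_sdiff.mp hj').2 (hC hik (mem_sdiff.mp hj).1)

lemma biUnion_layer_subset (hC : Monotone C) {K : Finset ℕ} {p : ℕ} (hK : K ⊆ range p) :
    K.biUnion (layer C) ⊆ C p :=
  biUnion_subset.mpr fun _ hk => sdiff_subset.trans (hC (mem_range.mp (hK hk)))

lemma sum_le_sum_biUnion_layer (hC : Monotone C) {K : Finset ℕ}
    (hlayer : ∀ k ∈ K, w k ≤ ∑ j ∈ layer C k, z j) :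
    ∑ k ∈ K, w k ≤ ∑ j ∈ K.biUnion (layer C), z j := by
  rw [sum_biUnion fun i _ k _ hik => pairwise_disjoint_layer hC hik]
  exact sum_le_sum hlayer

lemma sum_mul_maxInter_eq {p : ℕ} (hC : Monotone C) (hu : 0 < u) (hpm : p ≤ m + 1)
    (hlow : ∀ k < p, u ≤ #(A \ C k)) (hhigh : #(A \ C p) < u) :
    ∑ k ∈ range (m + 1), w k * maxInter (C k) (layer C k) (demand m k) u A =
      ∑ k ∈ range p, w k * u - ∑ k ∈ range p with k < m ∧ Disjoint A (layer C k), w k +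
        ∑ k ∈ Ico p (m + 1), w k * #(A \ C k) := by
  rw [← sum_range_add_sum_Ico _ hpm, sum_filter, ← sum_sub_distrib]
  congr 1
  · refine sum_congr rfl fun k hk => ?_
    rw [maxInter_layer_of_le hu (hlow k (mem_range.mp hk)), mul_sub, mul_ite, mul_one, mul_zero]
  · refine sum_congr rfl fun k hk => ?_
    have hsub := sdiff_subset_sdiff (subset_refl A) (hC (mem_Ico.mp hk).1)
    rw [maxInter_layer_of_lt ((card_le_card hsub).trans_lt hhigh)]

lemma sum_mul_minInter_eq [Fintype ι] {p : ℕ} (hpm : p ≤ m + 1)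
    (hlow : ∀ k < p, l ≤ #(A ∪ C k)ᶜ) (hhigh : ∀ k ∈ Ico p (m + 1), #(A ∪ C k)ᶜ < l) :
    ∑ k ∈ range (m + 1), w k * minInter (C k) (layer C k) (demand m k) l A =
      ∑ k ∈ range p with k < m ∧ layer C k ⊆ A, w k +
        ∑ k ∈ Ico p (m + 1), w k * (l - #(A ∪ C k)ᶜ) := by
  rw [← sum_range_add_sum_Ico _ hpm, sum_filter]
  congr 1
  · refine sum_congr rfl fun k hk => ?_
    rw [minInter_layer_of_le (hlow k (mem_range.mp hk)), mul_ite, mul_one, mul_zero]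
  · refine sum_congr rfl fun k hk => ?_
    rw [minInter_layer_of_lt (hhigh k hk), Nat.cast_sub (hhigh k hk).le]

/- Below the first `p` with `#(A \ C p) < u` a layer missed by `A` costs one unit of rank; adding
all these layers to `A` turns the mixing inequality into the rank inequality. -/
lemma sum_le_sum_mul_maxInter (hC : Monotone C) (hA : A ⊆ C (m + 1)) (hu : 0 < u)
    (hlayer : ∀ k < m, w k ≤ ∑ j ∈ layer C k, z j)
    (hmix : ∀ p ≤ m + 1, ∀ A : Finset ι, #(A \ C p) < u → ∑ j ∈ A, z j ≤
      ∑ k ∈ range p, w k * u + ∑ k ∈ Ico p (m + 1), w k * #(A \ C k)) :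
    ∑ j ∈ A, z j ≤ ∑ k ∈ range (m + 1), w k * maxInter (C k) (layer C k) (demand m k) u A := by
  have htop : #(A \ C (m + 1)) < u := by rwa [sdiff_eq_empty_iff_subset.mpr hA, card_empty]
  have hex : ∃ p, #(A \ C p) < u := ⟨m + 1, htop⟩
  set p := Nat.find hex
  have hpm : p ≤ m + 1 := Nat.find_min' hex htop
  set K := {k ∈ range p | k < m ∧ Disjoint A (layer C k)} with hK
  set V := K.biUnion (layer C)
  have hAV : Disjoint A V := (disjoint_biUnion_right _ _ _).mpr fun k hk => (mem_filter.mp hk).2.2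
  have hV : ∑ k ∈ K, w k ≤ ∑ j ∈ V, z j :=
    sum_le_sum_biUnion_layer hC fun k hk => hlayer k (mem_filter.mp hk).2.1
  have hVp : V ⊆ C p := biUnion_layer_subset hC (filter_subset _ _)
  have hsdiff {k : ℕ} (hk : p ≤ k) : (A ∪ V) \ C k = A \ C k := by
    rw [union_sdiff_distrib, sdiff_eq_empty_iff_subset.mpr (hVp.trans (hC hk)), union_empty]
  have hmixAV := hmix p hpm (A ∪ V) (hsdiff le_rfl ▸ Nat.find_spec hex)
  have habove : ∑ k ∈ Ico p (m + 1), w k * (#((A ∪ V) \ C k) : ℝ) =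
      ∑ k ∈ Ico p (m + 1), w k * #(A \ C k) :=
    sum_congr rfl fun k hk => by rw [hsdiff (mem_Ico.mp hk).1]
  rw [sum_union hAV, habove] at hmixAV
  rw [sum_mul_maxInter_eq hC hu hpm (fun k hk => not_lt.mp (Nat.find_min hex hk))
    (Nat.find_spec hex), ← hK]
  linarith

/- Dually, below the first `p` with `#(A ∪ C p)ᶜ < l` the layers contained in `A` contribute one
unit each, and they are removed from `A` before the mixing inequality is applied. -/
lemma sum_mul_minInter_le_sum [Fintype ι] (hC : Monotone C)
    (hlayer : ∀ k < m, w k ≤ ∑ j ∈ layer C k, z j)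
    (hmix : ∀ p ≤ m + 1, ∀ A : Finset ι, (∀ k < p, l ≤ #(A ∪ C k)ᶜ) →
      (∀ k ∈ Ico p (m + 1), #(A ∪ C k)ᶜ < l) →
        ∑ k ∈ Ico p (m + 1), w k * (l - #(A ∪ C k)ᶜ) ≤ ∑ j ∈ A, z j) :
    ∑ k ∈ range (m + 1), w k * minInter (C k) (layer C k) (demand m k) l A ≤ ∑ j ∈ A, z j := by
  have hex : ∃ p, #(A ∪ C p)ᶜ < l ∨ p = m + 1 := ⟨m + 1, .inr rfl⟩
  set p := Nat.find hex
  have hpm : p ≤ m + 1 := Nat.find_min' hex (.inr rfl)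
  have hlow (k : ℕ) (hk : k < p) : l ≤ #(A ∪ C k)ᶜ :=
    not_lt.mp (not_or.mp (Nat.find_min hex hk)).1
  have hhigh (k : ℕ) (hk : k ∈ Ico p (m + 1)) : #(A ∪ C k)ᶜ < l := by
    obtain ⟨hpk, hkm⟩ := mem_Ico.mp hk
    refine (card_le_card (compl_subset_compl.mpr (union_subset_union_right (hC hpk)))).trans_lt ?_
    exact (Nat.find_spec hex).resolve_right (by omega)
  set K := {k ∈ range p | k < m ∧ layer C k ⊆ A} with hK
  set V := K.biUnion (layer C)
  have hVA : V ⊆ A := biUnion_subset.mpr fun k hk => (mem_filter.mp hk).2.2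
  have hV : ∑ k ∈ K, w k ≤ ∑ j ∈ V, z j :=
    sum_le_sum_biUnion_layer hC fun k hk => hlayer k (mem_filter.mp hk).2.1
  have hVp : V ⊆ C p := biUnion_layer_subset hC (filter_subset _ _)
  have hunion {k : ℕ} (hk : k ∈ Ico p (m + 1)) : A \ V ∪ C k = A ∪ C k := by
    have := hVp.trans (hC (mem_Ico.mp hk).1)
    grind
  have hmixAV := hmix p hpm (A \ V)
    (fun k hk => (hlow k hk).trans (card_le_card
      (compl_subset_compl.mpr (union_subset_union_left sdiff_subset))))
    fun k hk => hunion hk ▸ hhigh k hk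
  rw [sum_congr rfl fun k hk => by rw [hunion hk]] at hmixAV
  rw [sum_mul_minInter_eq hpm hlow hhigh, ← hK, ← sum_sdiff hVA]
  linarith

end Chain

section LevelWeight

variable {m : ℕ} {δ : Fin m → ℝ} {k p q : ℕ}

lemma dd_zero (m : ℕ) (δ : Fin m → ℝ) : dd m δ 0 = 1 := by simp [dd]

lemma dd_succ (hk : k < m) : dd m δ (k + 1) = δ ⟨k, hk⟩ := by
  rw [dd, dif_pos (by omega)]
  rfl

lemma dd_of_lt (hk : m < k) : dd m δ k = 0 := by
  rw [dd, dif_neg (by omega), if_neg (by omega)]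

/-- The weight `δ_k - δ_{k+1}` (with `δ_0 = 1` and `δ_{m+1} = 0`) that a convex combination of
points of `Xset` representing `δ` has to put on the points whose support lies in the `k`-th slice
of the chain. -/
def levelWeight (m : ℕ) (δ : Fin m → ℝ) (k : ℕ) : ℝ := dd m δ k - dd m δ (k + 1)

lemma sum_Ico_levelWeight (hpq : p ≤ q) :
    ∑ k ∈ Ico p q, levelWeight m δ k = dd m δ p - dd m δ q := by
  induction q, hpq using Nat.le_induction with
  | base => simp
  | succ q hpq ih => rw [sum_Ico_succ_top hpq, ih, levelWeight, sub_add_sub_cancel]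

lemma sum_range_levelWeight (m : ℕ) (δ : Fin m → ℝ) (p : ℕ) :
    ∑ k ∈ range p, levelWeight m δ k = 1 - dd m δ p := by
  rw [range_eq_Ico, sum_Ico_levelWeight (Nat.zero_le p), dd_zero]

lemma sum_range_succ_levelWeight (m : ℕ) (δ : Fin m → ℝ) :
    ∑ k ∈ range (m + 1), levelWeight m δ k = 1 := by
  rw [sum_range_levelWeight, dd_of_lt m.lt_succ_self, sub_zero]

lemma sum_Ico_sub_mul_eq (f D : ℕ → ℝ) (hpq : p ≤ q) :
    ∑ k ∈ Ico p q, (D k - D (k + 1)) * f k + D q * f q =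
      f p * D p + ∑ i ∈ Icc (p + 1) q, (f i - f (i - 1)) * D i := by
  induction q, hpq using Nat.le_induction with
  | base => simp [mul_comm]
  | succ q hpq ih =>
    rw [sum_Ico_succ_top hpq, ← insert_Icc_right_eq_Icc_add_one (by omega), sum_insert (by simp),
      Nat.add_sub_cancel]
    linarith

lemma sum_Ico_levelWeight_mul (f : ℕ → ℝ) (hp : p ≤ m) :
    ∑ k ∈ Ico p (m + 1), levelWeight m δ k * f k =
      f p * dd m δ p + ∑ i ∈ Icc (p + 1) m, (f i - f (i - 1)) * dd m δ i := by
  rw [← sum_Ico_sub_mul_eq f (dd m δ) hp, sum_Ico_succ_top hp]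
  simp only [levelWeight, dd_of_lt m.lt_succ_self, sub_zero]

/-- The vector of the values `δ_i` at a point of `Xset` whose support lies in the `k`-th slice. -/
def stepVector (m k : ℕ) : Fin m → ℝ := fun i => if i.val < k then 1 else 0

lemma dd_stepVector (hk : k ≤ m) (i : ℕ) : dd m (stepVector m k) i = if i ≤ k then 1 else 0 := by
  cases i with
  | zero => simp [dd_zero]
  | succ i =>
    rcases lt_or_ge i m with hi | hi
    · simp only [dd_succ hi, stepVector, Nat.succ_le_iff]
    · rw [dd_of_lt (by omega), if_neg (by omega)]

lemma levelWeight_stepVector (hk : k ≤ m) (i : ℕ) :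
    levelWeight m (stepVector m k) i = if i = k then 1 else 0 := by
  simp only [levelWeight, dd_stepVector hk]
  split_ifs <;> first | omega | norm_num

lemma sum_levelWeight_smul_stepVector (δ : Fin m → ℝ) :
    ∑ k ∈ range (m + 1), levelWeight m δ k • stepVector m k = δ := by
  ext i
  have hfilter : {k ∈ range (m + 1) | i.val < k} = Ico (i.val + 1) (m + 1) := by
    ext k
    simp only [mem_filter, mem_range, mem_Ico]
    omega
  simp only [Finset.sum_apply, Pi.smul_apply, stepVector, smul_eq_mul, mul_ite, mul_one, mul_zero]
  rw [← sum_filter, hfilter, sum_Ico_levelWeight (by omega), dd_succ i.isLt,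
    dd_of_lt m.lt_succ_self, sub_zero]

end LevelWeight

section NestedChain

variable {n m l u k p : ℕ} {S : Fin m → Finset (Fin n)} {z : Fin n → ℝ} {δ : Fin m → ℝ}
  {A : Finset (Fin n)}

lemma SS_zero (n m : ℕ) (S : Fin m → Finset (Fin n)) : SS n m S 0 = ∅ := by simp [SS]

lemma SS_succ (hk : k < m) : SS n m S (k + 1) = S ⟨k, hk⟩ := by
  rw [SS, dif_pos (by omega)]
  rfl

lemma SS_of_lt (hk : m < k) : SS n m S k = univ := by
  rw [SS, dif_neg (by omega), if_neg (by omega)]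

lemma monotone_SS (hS : Monotone S) : Monotone (SS n m S) := by
  refine monotone_nat_of_le_succ fun k => ?_
  rcases k.eq_zero_or_pos with rfl | hk
  · rw [SS_zero]; exact empty_subset _
  rcases lt_or_ge k m with hkm | hkm
  · obtain ⟨k, rfl⟩ := Nat.exists_eq_add_one.mpr hk
    rw [SS_succ hkm, SS_succ (k.lt_succ_self.trans hkm)]
    exact hS (Fin.mk_le_mk.mpr k.le_succ)
  · rw [SS_of_lt (Nat.lt_succ_of_le hkm)]; exact subset_univ _

lemma layer_SS_nonempty (hS : StrictMono S) (hS1 : (SS n m S 1).Nonempty) (hk : k < m) :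
    (layer (SS n m S) k).Nonempty := by
  cases k with
  | zero => rwa [layer, SS_zero, sdiff_empty]
  | succ k =>
    rw [layer, SS_succ hk, SS_succ (k.lt_succ_self.trans hk)]
    exact sdiff_nonempty.mpr (hS (Fin.mk_lt_mk.mpr k.lt_succ_self)).2

lemma mixLe_iff (hp : p ≤ m) : MixLe n m u S p A (z, δ) ↔
    ∑ j ∈ A, z j ≤ ∑ k ∈ range p, levelWeight m δ k * u +
      ∑ k ∈ Ico p (m + 1), levelWeight m δ k * #(A \ SS n m S k) := by
  have habel := sum_Ico_levelWeight_mul (δ := δ) (fun k => (u - #(A \ SS n m S k) : ℝ)) hp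
  have hlhs : mixLeLHS n m u S p A (z, δ) =
      ∑ j ∈ A, z j + ∑ k ∈ Ico p (m + 1), levelWeight m δ k * (u - #(A \ SS n m S k)) := by
    simp only [habel, mixLeLHS, sub_sub_sub_cancel_left, add_assoc]
  rw [MixLe, hlhs, ← sum_mul, sum_range_levelWeight]
  simp only [mul_sub, sum_sub_distrib]
  rw [← sum_mul, sum_Ico_levelWeight (by omega), dd_of_lt m.lt_succ_self]
  constructor <;> intro h <;> linarith

lemma mixGe_iff (hp : p ≤ m) : MixGe n m l S p A (z, δ) ↔
    ∑ k ∈ Ico p (m + 1), levelWeight m δ k * (l - #(A ∪ SS n m S k)ᶜ) ≤ ∑ j ∈ A, z j := by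
  have hcompl (k : ℕ) :
      (l - #(A ∪ SS n m S k)ᶜ : ℝ) = #(A ∪ SS n m S k) - (n : ℝ) + l := by
    rw [card_compl, Nat.cast_sub (card_le_univ _), Fintype.card_fin]
    ring
  have habel := sum_Ico_levelWeight_mul (δ := δ) (fun k => (#(A ∪ SS n m S k) - (n : ℝ) + l)) hp
  simp only [hcompl, habel, MixGe, mixGeLHS, sub_nonpos, add_sub_add_right_eq_sub,
    sub_sub_sub_cancel_right]

end NestedChain

section Points

variable {n m l u : ℕ} {S : Fin m → Finset (Fin n)}

lemma prod_one_sub_incidenceVector {ι : Type*} [DecidableEq ι] (A T : Finset ι) :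
    ∏ j ∈ A, (1 - incidenceVector T j) = if Disjoint T A then 1 else 0 := by
  split_ifs with hdisj
  · refine prod_eq_one fun j hj => ?_
    rw [incidenceVector, if_neg (disjoint_right.mp hdisj hj), sub_zero]
  · obtain ⟨j, hjT, hjA⟩ := not_disjoint_iff.mp hdisj
    exact prod_eq_zero hjA (by rw [incidenceVector, if_pos hjT, sub_self])

lemma mem_Xset_iff {x : (Fin n → ℝ) × (Fin m → ℝ)} : x ∈ Xset n m l u S ↔
    ∃ T : Finset (Fin n), (l ≤ #T ∧ #T ≤ u) ∧
      x = (incidenceVector T, fun i => if Disjoint T (S i) then 1 else 0) := by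
  have hcard (T : Finset (Fin n)) : ∑ j, incidenceVector T j = (#T : ℝ) := by
    rw [sum_incidenceVector, inter_univ]
  constructor
  · rintro ⟨hz, -, hδ, hl, hu⟩
    have hx : x.1 = incidenceVector {j | x.1 j = 1} := by
      ext j
      rcases hz j with h | h <;> simp [incidenceVector, h]
    rw [hx, hcard, Nat.cast_le] at hl hu
    refine ⟨_, ⟨hl, hu⟩, Prod.ext hx (funext fun i => ?_)⟩
    simp only [hδ, ← prod_one_sub_incidenceVector, ← hx]
  · rintro ⟨T, ⟨hl, hu⟩, rfl⟩
    refine ⟨fun j => ?_, fun i => ?_, fun i => (prod_one_sub_incidenceVector _ _).symm, ?_, ?_⟩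
    · exact (ite_eq_or_eq _ _ _).symm
    · exact (ite_eq_or_eq _ _ _).symm
    · rw [hcard]; exact_mod_cast hl
    · rw [hcard]; exact_mod_cast hu

lemma stepVector_eq_of_mem_chainSlice (hS : Monotone S) {k : ℕ} {T : Finset (Fin n)}
    (hT : T ∈ chainSlice (SS n m S) m l u k) :
    stepVector m k = fun i => if Disjoint T (S i) then 1 else 0 := by
  ext i
  simp only [stepVector, ← SS_succ i.isLt,
    disjoint_iff_le_of_mem_chainSlice (monotone_SS hS) hT i.isLt, Nat.succ_le_iff]

lemma mem_Xset_iff_chainSlice (hS : Monotone S) {x : (Fin n → ℝ) × (Fin m → ℝ)} :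
    x ∈ Xset n m l u S ↔
      ∃ k ≤ m, ∃ T ∈ chainSlice (SS n m S) m l u k, x = (incidenceVector T, stepVector m k) := by
  rw [mem_Xset_iff]
  constructor
  · rintro ⟨T, ⟨hl, hu⟩, rfl⟩
    obtain ⟨k, hk, hT⟩ := exists_mem_chainSlice (C := SS n m S) (m := m) (SS_zero n m S) hl hu
    exact ⟨k, hk, T, hT, by rw [stepVector_eq_of_mem_chainSlice hS hT]⟩
  · rintro ⟨k, -, T, hT, rfl⟩
    exact ⟨T, hT.2.2, by rw [stepVector_eq_of_mem_chainSlice hS hT]⟩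

end Points

section ValidInequalities

variable {n m l u k : ℕ} {S : Fin m → Finset (Fin n)} {T : Finset (Fin n)}

lemma nestedLin_of_mem_chainSlice (hS : Monotone S) (hm : 0 < m) (hk : k ≤ m)
    (hT : T ∈ chainSlice (SS n m S) m l u k) :
    NestedLin n m l u S (incidenceVector T, stepVector m k) := by
  obtain ⟨hl, hu⟩ := hT.2.2
  have hz (j : Fin n) : (incidenceVector T j : ℝ) = 0 ∨ (incidenceVector T j : ℝ) = 1 :=
    (ite_eq_or_eq _ _ _).symm
  have hlayer {i : ℕ} (hi : i < m) :
      levelWeight m (stepVector m k) i ≤ ∑ j ∈ layer (SS n m S) i, incidenceVector T j := by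
    rw [levelWeight_stepVector hk, sum_incidenceVector]
    split_ifs with hik
    · subst hik
      exact_mod_cast (if_pos hi).ge.trans hT.2.1
    · exact Nat.cast_nonneg _
  refine ⟨?_, ?_, fun i j hj => ?_, ?_, ?_, fun j => ?_, fun j _ => ?_, fun i _ _ => ?_,
    fun i _ hi => hlayer hi⟩
  · rw [sum_incidenceVector, inter_univ]; exact_mod_cast hl
  · rw [sum_incidenceVector, inter_univ]; exact_mod_cast hu
  · rcases lt_or_ge i.val k with hik | hik
    · have hjT : j ∉ T := disjoint_right.mp hT.1 (monotone_SS hS hik (by rwa [SS_succ i.isLt]))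
      simp [incidenceVector, stepVector, hjT, hik]
    · rcases hz j with h | h <;> simp [stepVector, hik.not_gt, h]
  · have := hlayer hm
    rw [levelWeight, layer, SS_zero, sdiff_empty, dd_zero] at this
    exact sub_le_iff_le_add'.mp this
  · rw [dd_stepVector hk]; positivity
  · rcases hz j with h | h <;> simp [h]
  · rcases hz j with h | h <;> simp [h]
  · simp only [dd_stepVector hk]
    split_ifs <;> first | omega | norm_num

lemma mixLe_of_mem_chainSlice (hk : k ≤ m) (hT : T ∈ chainSlice (SS n m S) m l u k) {p : ℕ}
    (hp : p ≤ m) (A : Finset (Fin n)) : MixLe n m u S p A (incidenceVector T, stepVector m k) := by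
  rw [mixLe_iff hp, sum_incidenceVector]
  simp only [levelWeight_stepVector hk, ite_mul, one_mul, zero_mul, sum_ite_eq', mem_range,
    mem_Ico]
  rcases lt_or_ge k p with hkp | hkp
  · rw [if_pos hkp, if_neg (by omega), add_zero]
    exact_mod_cast (card_le_card inter_subset_left).trans hT.2.2.2
  · rw [if_neg (by omega), if_pos (by omega), zero_add]
    refine Nat.cast_le.mpr (card_le_card fun j hj => ?_)
    obtain ⟨hjT, hjA⟩ := mem_inter.mp hj
    exact mem_sdiff.mpr ⟨hjA, disjoint_left.mp hT.1 hjT⟩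

lemma mixGe_of_mem_chainSlice (hk : k ≤ m) (hT : T ∈ chainSlice (SS n m S) m l u k) {p : ℕ}
    (hp : p ≤ m) (A : Finset (Fin n)) : MixGe n m l S p A (incidenceVector T, stepVector m k) := by
  rw [mixGe_iff hp, sum_incidenceVector]
  simp only [levelWeight_stepVector hk, ite_mul, one_mul, zero_mul, sum_ite_eq', mem_Ico]
  split_ifs
  · have hsub : T \ A ⊆ (A ∪ SS n m S k)ᶜ := fun j hj => by
      obtain ⟨hjT, hjA⟩ := mem_sdiff.mp hj
      simp [hjA, disjoint_left.mp hT.1 hjT]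
    have hl : l ≤ #(T ∩ A) + #(A ∪ SS n m S k)ᶜ := by
      have := card_inter_add_card_sdiff T A
      have := card_le_card hsub
      have := hT.2.2.1
      omega
    rw [sub_le_iff_le_add]
    exact_mod_cast hl
  · exact Nat.cast_nonneg _

end ValidInequalities

section AffineFunctions

variable {E : Type*} [AddCommGroup E] [Module ℝ E]

/-- The affine functions `E → ℝ`, as a submodule of all functions, so that closure under linear
combinations is available for functions given by formulas. -/
def affineFunctions (E : Type*) [AddCommGroup E] [Module ℝ E] : Submodule ℝ (E → ℝ) where
  carrier := {F | ∀ x y : E, ∀ a b : ℝ, a + b = 1 → F (a • x + b • y) = a * F x + b * F y}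
  zero_mem' := by simp
  add_mem' {F G} hF hG x y a b hab := by
    simp only [Pi.add_apply, hF x y a b hab, hG x y a b hab]
    ring
  smul_mem' c F hF x y a b hab := by
    simp only [Pi.smul_apply, smul_eq_mul, hF x y a b hab]
    ring

lemma const_mem_affineFunctions (c : ℝ) : (fun _ => c) ∈ affineFunctions E :=
  fun _ _ a b hab => by rw [← add_mul, hab, one_mul]

lemma convex_setOf_le {F G : E → ℝ} (hF : F ∈ affineFunctions E) (hG : G ∈ affineFunctions E) :
    Convex ℝ {x | F x ≤ G x} := by
  intro x hx y hy a b ha hb hab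
  rw [Set.mem_ofPred_eq, hF x y a b hab, hG x y a b hab]
  exact add_le_add (mul_le_mul_of_nonneg_left hx ha) (mul_le_mul_of_nonneg_left hy hb)

end AffineFunctions

section NestedPolyhedron

variable {n m l u : ℕ} {S : Fin m → Finset (Fin n)} {z : Fin n → ℝ} {δ : Fin m → ℝ}

/-- The polyhedron cut out by the nested linearization system and the mixing inequalities
`Mix≤(S',p)` and `Mix≥(S',p)`. -/
def nestedPolyhedron (n m l u : ℕ) (S : Fin m → Finset (Fin n)) :
    Set ((Fin n → ℝ) × (Fin m → ℝ)) :=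
  {zd | NestedLin n m l u S zd ∧
    (∀ p : ℕ, 1 ≤ p → p ≤ m → ∀ S' : Finset (Fin n),
      #(S' \ SS n m S p) ≤ u - 1 → MixLe n m u S p S' zd) ∧
    (∀ p : ℕ, 1 ≤ p → p ≤ m → ∀ S' : Finset (Fin n),
      #(S' ∪ SS n m S (p - 1)) ≤ n - l → n - l < #(S' ∪ SS n m S p) → MixGe n m l S p S' zd)}

lemma Xset_subset_nestedPolyhedron (hS : Monotone S) (hm : 0 < m) :
    Xset n m l u S ⊆ nestedPolyhedron n m l u S := by
  intro x hx
  obtain ⟨k, hk, T, hT, rfl⟩ := (mem_Xset_iff_chainSlice hS).mp hx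
  exact ⟨nestedLin_of_mem_chainSlice hS hm hk hT,
    fun p _ hp A _ => mixLe_of_mem_chainSlice hk hT hp A,
    fun p _ hp A _ _ => mixGe_of_mem_chainSlice hk hT hp A⟩

lemma coord_mem_affineFunctions (j : Fin n) :
    (fun x => x.1 j) ∈ affineFunctions ((Fin n → ℝ) × (Fin m → ℝ)) :=
  fun _ _ _ _ _ => rfl

lemma dd_mem_affineFunctions (k : ℕ) :
    (fun x => dd m x.2 k) ∈ affineFunctions ((Fin n → ℝ) × (Fin m → ℝ)) := by
  cases k with
  | zero => simpa only [dd_zero] using const_mem_affineFunctions 1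
  | succ k =>
    rcases lt_or_ge k m with hk | hk
    · simp only [dd_succ hk]
      exact fun _ _ _ _ _ => rfl
    · simpa only [dd_of_lt (Nat.lt_succ_of_le hk)] using const_mem_affineFunctions 0

lemma sum_coord_mem_affineFunctions (A : Finset (Fin n)) :
    (fun x => ∑ j ∈ A, x.1 j) ∈ affineFunctions ((Fin n → ℝ) × (Fin m → ℝ)) := by
  simpa only [sum_fn] using sum_mem fun j (_ : j ∈ A) => coord_mem_affineFunctions j

lemma sum_mul_dd_mem_affineFunctions (I : Finset ℕ) (c : ℕ → ℝ) :
    (fun x => ∑ i ∈ I, c i * dd m x.2 i) ∈ affineFunctions ((Fin n → ℝ) × (Fin m → ℝ)) := by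
  simpa only [sum_fn, Pi.smul_apply, smul_eq_mul] using
    sum_mem fun i (_ : i ∈ I) => Submodule.smul_mem _ (c i) (dd_mem_affineFunctions i)

lemma convex_setOf_nestedLin : Convex ℝ {x | NestedLin n m l u S x} := by
  have hz := coord_mem_affineFunctions (n := n) (m := m)
  have hd := dd_mem_affineFunctions (n := n) (m := m)
  have hsum := sum_coord_mem_affineFunctions (n := n) (m := m)
  have hconst := const_mem_affineFunctions (E := (Fin n → ℝ) × (Fin m → ℝ))
  simp only [NestedLin, Set.ofPred_and, Set.ofPred_forall]
  refine .inter (convex_setOf_le (hconst _) (hsum _)) <|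
    .inter (convex_setOf_le (hsum _) (hconst _)) <|
    .inter (convex_iInter fun i => convex_iInter₂ fun j _ => ?_) <|
    .inter (convex_setOf_le (hconst _) (add_mem (hd 1) (hsum _))) <|
    .inter (convex_setOf_le (hconst _) (hd m)) <|
    .inter (convex_iInter fun j => convex_setOf_le (hconst _) (hz j)) <|
    .inter (convex_iInter₂ fun j _ => convex_setOf_le (hz j) (hconst _)) <|
    .inter (convex_iInter fun i => convex_iInter₂ fun _ _ => convex_setOf_le (hd _) (hd _)) <|
    convex_iInter fun i => convex_iInter₂ fun _ _ =>
      convex_setOf_le (sub_mem (hd _) (hd _)) (hsum _)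
  have hδ := dd_mem_affineFunctions (n := n) (m := m) (i + 1)
  simp only [dd_succ i.isLt] at hδ
  exact convex_setOf_le (add_mem (hz j) hδ) (hconst 1)

lemma convex_setOf_mixLe (p : ℕ) (A : Finset (Fin n)) : Convex ℝ {x | MixLe n m u S p A x} :=
  convex_setOf_le (add_mem (add_mem (sum_coord_mem_affineFunctions A)
    (Submodule.smul_mem _ _ (dd_mem_affineFunctions p))) (sum_mul_dd_mem_affineFunctions _ _))
    (const_mem_affineFunctions _)

lemma convex_setOf_mixGe (p : ℕ) (A : Finset (Fin n)) : Convex ℝ {x | MixGe n m l S p A x} :=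
  convex_setOf_le (sub_mem (add_mem (Submodule.smul_mem _ _ (dd_mem_affineFunctions p))
    (sum_mul_dd_mem_affineFunctions _ _)) (sum_coord_mem_affineFunctions A))
    (const_mem_affineFunctions _)

lemma convex_nestedPolyhedron : Convex ℝ (nestedPolyhedron n m l u S) := by
  simp only [nestedPolyhedron, Set.ofPred_and, Set.ofPred_forall]
  exact convex_setOf_nestedLin.inter <| .inter
    (convex_iInter fun p => convex_iInter₂ fun _ _ => convex_iInter₂ fun A _ =>
      convex_setOf_mixLe p A)
    (convex_iInter fun p => convex_iInter₂ fun _ _ => convex_iInter fun A =>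
      convex_iInter₂ fun _ _ => convex_setOf_mixGe p A)

end NestedPolyhedron

section Decomposition

open scoped Pointwise

variable {n m l u : ℕ} {S : Fin m → Finset (Fin n)} {z : Fin n → ℝ} {δ : Fin m → ℝ}

lemma levelWeight_nonneg (hm : 0 < m) (hS1 : (SS n m S 1).Nonempty)
    (h : NestedLin n m l u S (z, δ)) {k : ℕ} (hk : k ≤ m) : 0 ≤ levelWeight m δ k := by
  obtain ⟨-, -, hzδ, -, hδm, hz, -, hmono, -⟩ := h
  rw [levelWeight, sub_nonneg]
  rcases k.eq_zero_or_pos with rfl | hk0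
  · obtain ⟨j, hj⟩ := hS1
    rw [SS_succ hm] at hj
    rw [dd_zero, dd_succ hm]
    exact (le_add_of_nonneg_left (hz j)).trans (hzδ ⟨0, hm⟩ j hj)
  · rcases hk.lt_or_eq with hk | rfl
    · exact hmono k hk0 hk
    · rwa [dd_of_lt k.lt_succ_self]

lemma levelWeight_le_sum_layer (h : NestedLin n m l u S (z, δ)) {k : ℕ} (hk : k < m) :
    levelWeight m δ k ≤ ∑ j ∈ layer (SS n m S) k, z j := by
  obtain ⟨-, -, -, hδ1, -, -, -, -, hlayer⟩ := h
  rcases k.eq_zero_or_pos with rfl | hk0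
  · rw [levelWeight, dd_zero, layer, SS_zero, sdiff_empty]
    exact sub_le_iff_le_add'.mpr hδ1
  · exact hlayer k hk0 hk

lemma le_one_sub_dd (h : NestedLin n m l u S (z, δ)) {j : Fin n} {i : ℕ} (hi : i ≤ m)
    (hj : j ∉ SS n m S i) (hj' : j ∈ SS n m S (i + 1)) : z j ≤ 1 - dd m δ (i + 1) := by
  obtain ⟨-, -, hzδ, -, -, -, hz1, -, -⟩ := h
  rcases hi.lt_or_eq with hi | rfl
  · rw [SS_succ hi] at hj'
    rw [dd_succ hi]
    exact le_sub_iff_add_le.mpr (hzδ _ j hj')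
  · rw [dd_of_lt i.lt_succ_self, sub_zero]
    exact hz1 j hj

lemma le_sum_levelWeight (hS : Monotone S) (h : NestedLin n m l u S (z, δ)) (j : Fin n) :
    z j ≤ ∑ k ∈ range (m + 1) with j ∉ SS n m S k, levelWeight m δ k := by
  have htop : j ∈ SS n m S (m + 1) := by
    rw [SS_of_lt m.lt_succ_self]
    exact mem_univ j
  have hex : ∃ i, j ∈ SS n m S (i + 1) := ⟨m, htop⟩
  set i := Nat.find hex
  have him : i ≤ m := Nat.find_min' hex htop
  have hmem : j ∈ SS n m S (i + 1) := Nat.find_spec hex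
  have hnotMem {k : ℕ} (hk : k ≤ i) : j ∉ SS n m S k := by
    cases k with
    | zero => simp [SS_zero]
    | succ k => exact Nat.find_min hex hk
  have hfilter : {k ∈ range (m + 1) | j ∉ SS n m S k} = range (i + 1) := by
    ext k
    rw [mem_filter, mem_range, mem_range]
    refine ⟨fun hk => ?_, fun hk => ⟨by omega, hnotMem (by omega)⟩⟩
    by_contra! hik
    exact hk.2 (monotone_SS hS hik hmem)
  rw [hfilter, sum_range_levelWeight]
  exact le_one_sub_dd h him (hnotMem le_rfl) hmem

lemma sum_le_sum_levelWeight_mul_card_sdiff (hS : Monotone S) (h : NestedLin n m l u S (z, δ))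
    (A : Finset (Fin n)) :
    ∑ j ∈ A, z j ≤ ∑ k ∈ range (m + 1), levelWeight m δ k * #(A \ SS n m S k) := by
  calc ∑ j ∈ A, z j
      ≤ ∑ j ∈ A, ∑ k ∈ range (m + 1) with j ∉ SS n m S k, levelWeight m δ k :=
        sum_le_sum fun j _ => le_sum_levelWeight hS h j
    _ = ∑ k ∈ range (m + 1), levelWeight m δ k * #(A \ SS n m S k) := by
        simp only [sum_filter]
        rw [sum_comm]
        refine sum_congr rfl fun k _ => ?_
        rw [← sum_filter, filter_notMem_eq_sdiff, sum_const, nsmul_eq_mul, mul_comm]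

lemma sum_le_of_mem_nestedPolyhedron (hS : Monotone S)
    (h : (z, δ) ∈ nestedPolyhedron n m l u S) {p : ℕ} (hp : p ≤ m + 1) {A : Finset (Fin n)}
    (hA : #(A \ SS n m S p) < u) :
    ∑ j ∈ A, z j ≤ ∑ k ∈ range p, levelWeight m δ k * u +
      ∑ k ∈ Ico p (m + 1), levelWeight m δ k * #(A \ SS n m S k) := by
  obtain ⟨hlin, hle, -⟩ := h
  rcases p.eq_zero_or_pos with rfl | hp0
  · rw [sum_range_zero, zero_add, ← range_eq_Ico]
    exact sum_le_sum_levelWeight_mul_card_sdiff hS hlin A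
  rcases hp.lt_or_eq with hpm | rfl
  · exact (mixLe_iff (by omega)).mp (hle p hp0 (by omega) A (by omega))
  · obtain ⟨-, hzu, -, -, -, hz, -⟩ := hlin
    rw [← sum_mul, sum_range_succ_levelWeight, one_mul, Ico_self, sum_empty, add_zero]
    exact (sum_le_univ_sum_of_nonneg hz).trans hzu

lemma le_sum_of_mem_nestedPolyhedron (hS : Monotone S)
    (h : (z, δ) ∈ nestedPolyhedron n m l u S) {p : ℕ} (hp : p ≤ m + 1) {A : Finset (Fin n)}
    (hlow : ∀ k < p, l ≤ #(A ∪ SS n m S k)ᶜ)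
    (hhigh : ∀ k ∈ Ico p (m + 1), #(A ∪ SS n m S k)ᶜ < l) :
    ∑ k ∈ Ico p (m + 1), levelWeight m δ k * (l - #(A ∪ SS n m S k)ᶜ) ≤ ∑ j ∈ A, z j := by
  obtain ⟨hlin, -, hge⟩ := h
  rcases p.eq_zero_or_pos with rfl | hp0
  · have hcover := sum_le_sum_levelWeight_mul_card_sdiff hS hlin Aᶜ
    have hsplit := sum_add_sum_compl A z
    have hl : (l : ℝ) ≤ ∑ j, z j := hlin.1
    rw [← range_eq_Ico]
    simp only [mul_sub, sum_sub_distrib, compl_union, ← sdiff_eq_inter_compl]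
    rw [← sum_mul, sum_range_succ_levelWeight]
    linarith
  rcases hp.lt_or_eq with hpm | rfl
  · have hlow' := hlow (p - 1) (by omega)
    have hhigh' := hhigh p (mem_Ico.mpr ⟨le_rfl, hpm⟩)
    rw [card_compl, Fintype.card_fin] at hlow' hhigh'
    have := card_le_univ (A ∪ SS n m S (p - 1))
    have := card_le_univ (A ∪ SS n m S p)
    rw [Fintype.card_fin] at *
    exact (mixGe_iff (by omega)).mp (hge p hp0 (by omega) A (by omega) (by omega))
  · rw [Ico_self, sum_empty]
    exact sum_nonneg fun j _ => hlin.2.2.2.2.2.1 j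

lemma demand_le_card_layer_SS (hS : StrictMono S) (hS1 : (SS n m S 1).Nonempty) (k : ℕ) :
    demand m k ≤ #(layer (SS n m S) k) := by
  unfold demand
  split_ifs with hk
  · exact one_le_card.mpr (layer_SS_nonempty hS hS1 hk)
  · exact Nat.zero_le _

lemma le_card_compl_SS (hS : Monotone S) (hSm : l ≤ n - #(SS n m S m)) {k : ℕ} (hk : k ≤ m) :
    l ≤ #(SS n m S k)ᶜ := by
  rw [card_compl, Fintype.card_fin]
  exact hSm.trans (Nat.sub_le_sub_left (card_le_card (monotone_SS hS hk)) n)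

lemma mem_sum_levelWeight_smul_convexHull (hm : 0 < m) (hu : 0 < u) (hlu : l ≤ u)
    (hS : StrictMono S) (hS1 : (SS n m S 1).Nonempty) (hSm : l ≤ n - #(SS n m S m))
    (h : (z, δ) ∈ nestedPolyhedron n m l u S) :
    z ∈ ∑ k ∈ range (m + 1),
      levelWeight m δ k • convexHull ℝ (incidenceVector '' chainSlice (SS n m S) m l u k) := by
  have hmono : Monotone (SS n m S) := monotone_SS hS.monotone
  have hweight (k : ℕ) (hk : k ∈ range (m + 1)) : 0 ≤ levelWeight m δ k :=
    levelWeight_nonneg hm hS1 h.1 (mem_range_succ_iff.mp hk)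
  have hdemand := demand_le_card_layer_SS hS hS1
  have hroom (k : ℕ) (hk : k ∈ range (m + 1)) : l ≤ #(SS n m S k)ᶜ :=
    le_card_compl_SS hS.monotone hSm (mem_range_succ_iff.mp hk)
  have hlayer (k : ℕ) (hk : k < m) : levelWeight m δ k ≤ ∑ j ∈ layer (SS n m S) k, z j :=
    levelWeight_le_sum_layer h.1 hk
  refine mem_sum_smul_convexHull_incidenceVector
    (fun k _ => isGeneralizedMatroid_cardBoundedFamily _ _ _ _ _) hweight (fun A => ?_) fun A => ?_
  · choose! X hX hXA using fun k hk => exists_mem_maxInter_le (R := SS n m S k) sdiff_disjoint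
      (hdemand k) ((demand_le_one m k).trans hu) (hroom k hk) hlu A
    have hA : A ⊆ SS n m S (m + 1) := by
      rw [SS_of_lt m.lt_succ_self]
      exact subset_univ A
    have hrank := sum_le_sum_mul_maxInter hmono hA hu hlayer fun p hp B hB =>
      sum_le_of_mem_nestedPolyhedron hS.monotone h hp hB
    exact ⟨X, hX, hrank.trans (sum_le_sum fun k hk =>
      mul_le_mul_of_nonneg_left (Nat.cast_le.mpr (hXA k hk)) (hweight k hk))⟩
  · choose! X hX hXA using fun k hk => exists_mem_le_minInter (R := SS n m S k) sdiff_disjoint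
      (hdemand k) ((demand_le_one m k).trans hu) (hroom k hk) hlu A
    have hcorank := sum_mul_minInter_le_sum (A := A) hmono hlayer fun p hp B hlow hhigh =>
      le_sum_of_mem_nestedPolyhedron hS.monotone h hp hlow hhigh
    exact ⟨X, hX, (sum_le_sum fun k hk =>
      mul_le_mul_of_nonneg_left (Nat.cast_le.mpr (hXA k hk)) (hweight k hk)).trans hcorank⟩

lemma mem_convexHull_of_mem_sum_smul (hS : Monotone S)
    (hweight : ∀ k ≤ m, 0 ≤ levelWeight m δ k)
    (hz : z ∈ ∑ k ∈ range (m + 1),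
      levelWeight m δ k • convexHull ℝ (incidenceVector '' chainSlice (SS n m S) m l u k)) :
    (z, δ) ∈ convexHull ℝ (Xset n m l u S) := by
  obtain ⟨v, hv, rfl⟩ := (Set.mem_finsetSum _ _ _).mp hz
  choose! y hy hyv using fun (k : ℕ) (hk : k ∈ range (m + 1)) => Set.mem_smul_set.mp (hv hk)
  have hpoint (k : ℕ) (hk : k ∈ range (m + 1)) :
      (y k, stepVector m k) ∈ convexHull ℝ (Xset n m l u S) := by
    have hprod : (y k, stepVector m k) ∈ convexHull ℝ
        ((incidenceVector '' chainSlice (SS n m S) m l u k) ×ˢ {stepVector m k}) := by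
      rw [convexHull_prod, convexHull_singleton]
      exact Set.mk_mem_prod (hy k hk) rfl
    refine convexHull_mono ?_ hprod
    rintro ⟨_, _⟩ ⟨⟨T, hT, rfl⟩, rfl⟩
    exact (mem_Xset_iff_chainSlice hS).mpr ⟨k, mem_range_succ_iff.mp hk, T, hT, rfl⟩
  have hsum : ∑ k ∈ range (m + 1), levelWeight m δ k • (y k, stepVector m k) =
      (∑ k ∈ range (m + 1), v k, δ) := by
    refine Prod.ext ?_ ?_
    · rw [Prod.fst_sum]
      exact sum_congr rfl fun k hk => hyv k hk
    · rw [Prod.snd_sum]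
      exact sum_levelWeight_smul_stepVector δ
  rw [← hsum]
  exact (convex_convexHull ℝ _).sum_mem (fun k hk => hweight k (mem_range_succ_iff.mp hk))
    (sum_range_succ_levelWeight m δ) hpoint

end Decomposition

theorem stmt13_general (n m l u : ℕ) (S : Fin m → Finset (Fin n)) (hm : 0 < m) (hu : 0 < u)
    (hlu : l ≤ u) (hS : StrictMono S) (hS1 : (SS n m S 1).Nonempty)
    (hSm : l ≤ n - #(SS n m S m)) :
    convexHull ℝ (Xset n m l u S) = nestedPolyhedron n m l u S := by
  refine Set.Subset.antisymm
    (convexHull_min (Xset_subset_nestedPolyhedron hS.monotone hm) convex_nestedPolyhedron) ?_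
  rintro ⟨z, δ⟩ hzδ
  exact mem_convexHull_of_mem_sum_smul hS.monotone
    (fun k hk => levelWeight_nonneg hm hS1 hzδ.1 hk)
    (mem_sum_levelWeight_smul_convexHull hm hu hlu hS hS1 hSm hzδ)

theorem stmt13 (n m l u : ℕ) (S : Fin m → Finset (Fin n))
    (hn : 0 < n) (hm : 0 < m) (hu : 2 ≤ u) (hlu : l < u)
    (hnested : ∀ i j : Fin m, i < j → S i ⊂ S j)
    (hS1 : 2 ≤ (SS n m S 1).card)
    (hSm : l ≤ n - (SS n m S m).card)
    :
    convexHull ℝ (Xset n m l u S) =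
      {zd : (Fin n → ℝ) × (Fin m → ℝ) |
        NestedLin n m l u S zd ∧
        (∀ p : ℕ, 1 ≤ p → p ≤ m → ∀ S' : Finset (Fin n),
          (S' \ SS n m S p).card ≤ u - 1 → MixLe n m u S p S' zd) ∧
        (∀ p : ℕ, 1 ≤ p → p ≤ m → ∀ S' : Finset (Fin n),
          (S' ∪ SS n m S (p - 1)).card ≤ n - l → n - l < (S' ∪ SS n m S p).card →
            MixGe n m l S p S' zd)} :=
  stmt13_general n m l u S hm (by omega) hlu.le (fun _ _ h => hnested _ _ h)
    (card_pos.mp (by omega)) hSm
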